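/- Let m, n, h, w be positive integers with 1 ≤ h ≤ m and 1 ≤ w ≤ n. The number of intervals I of Fin m × Fin n whose projection to the first coordinate has exactly h elements and whose projection to the second coordinate has exactly w elements equals (m−h+1)(n−w+1) times the number of intervals of Fin h × Fin w whose both coordinate projections are surjective. -/

import Mathlib

open Classical

variable {P : Type} [PartialOrder P]

/-- Convexity of a subset of a poset. -/
def IsConvexSet (I : Set P) : Prop :=
  ∀ ⦃a b c : P⦄, a ∈ I → c ∈ I → a ≤ b → b ≤ c → b ∈ I

/-- Connectedness of a subset of a poset: any two elements are joined by a
sequence inside the subset in which consecutive elements are comparable. -/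
def IsConnectedSet (I : Set P) : Prop :=
  ∀ a ∈ I, ∀ b ∈ I,
    Relation.ReflTransGen (fun u v : P => u ∈ I ∧ v ∈ I ∧ (u ≤ v ∨ v ≤ u)) a b

/-- An interval of a poset: a nonempty, convex and connected subset. -/
def IsIntervalSet (I : Set P) : Prop :=
  I.Nonempty ∧ IsConvexSet I ∧ IsConnectedSet I

/-!
An interval `I` of a product of two chains is sorted by its pair of projections, which are
segments (order-connected subsets) of the two chains: a comparability path in `I` can only cross a
level by a single comparable step, and convexity fills in that level. There are `m - h + 1` segments
of size `h` in `Fin m`. For fixed segments `A`, `B` of sizes `h`, `w`, the increasing enumerations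
`Fin h ≃ A` and `Fin w ≃ B` identify the intervals projecting onto `A` and `B` with the intervals of
`Fin h × Fin w` projecting onto both factors.
-/

theorem ncard_biUnion_eq_mul {ι α : Type*} {t : Set ι} (ht : t.Finite) {s : ι → Set α}
    (hs : ∀ i ∈ t, (s i).Finite) (hdisj : t.PairwiseDisjoint s) {k : ℕ}
    (hk : ∀ i ∈ t, (s i).ncard = k) : (⋃ i ∈ t, s i).ncard = t.ncard * k := by
  rw [ht.ncard_biUnion hs hdisj, finsum_mem_congr rfl hk, finsum_mem_eq_finite_toFinset_sum _ ht,
    Finset.sum_const, smul_eq_mul, Set.ncard_eq_toFinset_card t ht]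

section Image

variable {Q : Type} [PartialOrder Q]

theorem isConvexSet_iff_ordConnected {I : Set P} : IsConvexSet I ↔ I.OrdConnected :=
  ⟨fun hI => ⟨fun _ ha _ hc _ hb => hI ha hc hb.1 hb.2⟩,
    fun hI _ _ _ ha hc hab hbc => hI.out ha hc ⟨hab, hbc⟩⟩

theorem isConvexSet_image_iff (f : P ↪o Q) (hf : (Set.range f).OrdConnected) {I : Set P} :
    IsConvexSet (f '' I) ↔ IsConvexSet I := by
  simp only [isConvexSet_iff_ordConnected]
  constructor
  · intro hI
    rw [← Set.preimage_image_eq I f.injective]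
    exact hI.preimage_mono f.monotone
  · refine fun hI => ⟨?_⟩
    rintro _ ⟨a, ha, rfl⟩ _ ⟨c, hc, rfl⟩
    rw [← f.image_Icc hf]
    exact Set.image_mono (hI.out ha hc)

theorem isConnectedSet_image_iff (f : P ↪o Q) {I : Set P} :
    IsConnectedSet (f '' I) ↔ IsConnectedSet I := by
  constructor
  · intro hI a ha b hb
    have : Nonempty P := ⟨a⟩
    have leftInv : Function.LeftInverse (Function.invFun f) f :=
      Function.leftInverse_invFun f.injective
    have path := Relation.ReflTransGen.lift (Function.invFun f)
      (p := fun u v => u ∈ I ∧ v ∈ I ∧ (u ≤ v ∨ v ≤ u)) ?_ _ _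
      (hI _ (Set.mem_image_of_mem f ha) _ (Set.mem_image_of_mem f hb))
    · rwa [Function.onFun, leftInv a, leftInv b] at path
    · rintro _ _ ⟨⟨u, hu, rfl⟩, ⟨v, hv, rfl⟩, huv⟩
      rw [f.le_iff_le, f.le_iff_le] at huv
      rw [Function.onFun, leftInv u, leftInv v]
      exact ⟨hu, hv, huv⟩
  · rintro hI _ ⟨a, ha, rfl⟩ _ ⟨b, hb, rfl⟩
    refine Relation.ReflTransGen.lift f ?_ _ _ (hI a ha b hb)
    rintro u v ⟨hu, hv, huv⟩
    exact ⟨Set.mem_image_of_mem f hu, Set.mem_image_of_mem f hv,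
      huv.imp (f.monotone ·) (f.monotone ·)⟩

theorem isIntervalSet_image_iff (f : P ↪o Q) (hf : (Set.range f).OrdConnected) {I : Set P} :
    IsIntervalSet (f '' I) ↔ IsIntervalSet I :=
  and_congr Set.image_nonempty
    (and_congr (isConvexSet_image_iff f hf) (isConnectedSet_image_iff f))

end Image

section Projections

variable {α β : Type}

theorem IsIntervalSet.ordConnected_image [LinearOrder α] {f : P → α} (hf : Monotone f)
    (hsurj : ∀ a b, a ≤ b → Set.SurjOn f (Set.Icc a b) (Set.Icc (f a) (f b)))
    {I : Set P} (hI : IsIntervalSet I) : (f '' I).OrdConnected := by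
  obtain ⟨-, hconvex, hconnected⟩ := hI
  refine ⟨?_⟩
  rintro _ ⟨a, ha, rfl⟩ _ ⟨b, hb, rfl⟩ k ⟨hak, hkb⟩
  induction hconnected a ha b hb with
  | refl => exact ⟨a, ha, le_antisymm hak hkb⟩
  | @tail u v _ step ih =>
    obtain ⟨hu, hv, huv⟩ := step
    rcases le_or_gt k (f u) with hku | huk
    · exact ih hu hku
    · have hle : u ≤ v := huv.resolve_right fun hvu => (hkb.trans (hf hvu)).not_gt huk
      obtain ⟨x, ⟨hux, hxv⟩, hxk⟩ := hsurj u v hle ⟨huk.le, hkb⟩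
      exact ⟨x, hconvex hu hv hux hxv, hxk⟩

theorem IsIntervalSet.ordConnected_image_fst [LinearOrder α] [PartialOrder β] {I : Set (α × β)}
    (hI : IsIntervalSet I) : (Prod.fst '' I).OrdConnected :=
  hI.ordConnected_image monotone_fst fun a _ hab k hk =>
    ⟨(k, a.2), ⟨Prod.mk_le_mk.2 ⟨hk.1, le_rfl⟩, Prod.mk_le_mk.2 ⟨hk.2, monotone_snd hab⟩⟩, rfl⟩

theorem IsIntervalSet.ordConnected_image_snd [PartialOrder α] [LinearOrder β] {I : Set (α × β)}
    (hI : IsIntervalSet I) : (Prod.snd '' I).OrdConnected :=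
  hI.ordConnected_image monotone_snd fun a _ hab k hk =>
    ⟨(a.1, k), ⟨Prod.mk_le_mk.2 ⟨le_rfl, hk.1⟩, Prod.mk_le_mk.2 ⟨monotone_fst hab, hk.2⟩⟩, rfl⟩

end Projections

section ProdMap

variable {α β γ δ : Type*} [PartialOrder α] [PartialOrder β] [PartialOrder γ]
  [PartialOrder δ]

/-- The product of two order embeddings, for the componentwise orders; it transports intervals of
the smaller grid into the larger one. -/
def prodMapOrderEmbedding (f : α ↪o γ) (g : β ↪o δ) : α × β ↪o γ × δ :=
  OrderEmbedding.ofMapLEIff (Prod.map f g) fun _ _ => and_congr f.le_iff_le g.le_iff_le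

theorem range_prodMapOrderEmbedding (f : α ↪o γ) (g : β ↪o δ) :
    Set.range (prodMapOrderEmbedding f g) = Set.range f ×ˢ Set.range g :=
  Set.range_prodMap

theorem ordConnected_range_prodMapOrderEmbedding {f : α ↪o γ} {g : β ↪o δ}
    (hf : (Set.range f).OrdConnected) (hg : (Set.range g).OrdConnected) :
    (Set.range (prodMapOrderEmbedding f g)).OrdConnected := by
  rw [range_prodMapOrderEmbedding, Set.prod_eq]
  exact (hf.preimage_mono monotone_fst).inter (hg.preimage_mono monotone_snd)

theorem image_fst_image_prodMapOrderEmbedding (f : α ↪o γ) (g : β ↪o δ) (I : Set (α × β)) :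
    Prod.fst '' (prodMapOrderEmbedding f g '' I) = f '' (Prod.fst '' I) :=
  Set.image_comm fun _ => rfl

theorem image_snd_image_prodMapOrderEmbedding (f : α ↪o γ) (g : β ↪o δ) (I : Set (α × β)) :
    Prod.snd '' (prodMapOrderEmbedding f g '' I) = g '' (Prod.snd '' I) :=
  Set.image_comm fun _ => rfl

end ProdMap

section FixedProjections

variable {α β γ δ : Type} [PartialOrder α] [PartialOrder β] [PartialOrder γ] [PartialOrder δ]

/-- The intervals of a product of posets with projections exactly `A` and `B`: the classes into
which the intervals of given height and width are partitioned. -/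
def intervalsWithProj (A : Set α) (B : Set β) : Set (Set (α × β)) :=
  {I | IsIntervalSet I ∧ Prod.fst '' I = A ∧ Prod.snd '' I = B}

theorem image_prodMapOrderEmbedding_mem_intervalsWithProj_iff {f : α ↪o γ} {g : β ↪o δ}
    (hf : (Set.range f).OrdConnected) (hg : (Set.range g).OrdConnected) {A : Set α} {B : Set β}
    {I : Set (α × β)} :
    prodMapOrderEmbedding f g '' I ∈ intervalsWithProj (f '' A) (g '' B) ↔
      I ∈ intervalsWithProj A B := by
  simp only [intervalsWithProj, Set.mem_ofPred_eq,
    isIntervalSet_image_iff _ (ordConnected_range_prodMapOrderEmbedding hf hg),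
    image_fst_image_prodMapOrderEmbedding, image_snd_image_prodMapOrderEmbedding,
    f.injective.image_injective.eq_iff, g.injective.image_injective.eq_iff]

theorem subset_prod_of_mem_intervalsWithProj {A : Set α} {B : Set β} {I : Set (α × β)}
    (hI : I ∈ intervalsWithProj A B) : I ⊆ A ×ˢ B := by
  obtain ⟨-, rfl, rfl⟩ := hI
  exact Set.subset_fst_image_prod_snd_image

theorem intervalsWithProj_image {f : α ↪o γ} {g : β ↪o δ} (hf : (Set.range f).OrdConnected)
    (hg : (Set.range g).OrdConnected) (A : Set α) (B : Set β) :
    intervalsWithProj (f '' A) (g '' B) =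
      Set.image (prodMapOrderEmbedding f g) '' intervalsWithProj A B := by
  ext I
  constructor
  · intro hI
    have hrange : I ⊆ Set.range (prodMapOrderEmbedding f g) := by
      rw [range_prodMapOrderEmbedding]
      exact (subset_prod_of_mem_intervalsWithProj hI).trans
        (Set.prod_mono (Set.image_subset_range f A) (Set.image_subset_range g B))
    obtain ⟨J, rfl⟩ := Set.subset_range_iff_exists_image_eq.1 hrange
    exact ⟨J, (image_prodMapOrderEmbedding_mem_intervalsWithProj_iff hf hg).1 hI, rfl⟩
  · rintro ⟨J, hJ, rfl⟩
    exact (image_prodMapOrderEmbedding_mem_intervalsWithProj_iff hf hg).2 hJ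

theorem ncard_intervalsWithProj_range {f : α ↪o γ} {g : β ↪o δ} (hf : (Set.range f).OrdConnected)
    (hg : (Set.range g).OrdConnected) :
    (intervalsWithProj (Set.range f) (Set.range g)).ncard =
      (intervalsWithProj (Set.univ : Set α) (Set.univ : Set β)).ncard := by
  rw [← Set.image_univ, ← Set.image_univ, intervalsWithProj_image hf hg,
    Set.ncard_image_of_injective _ (prodMapOrderEmbedding f g).injective.image_injective]

theorem intervalsWithProj_univ :
    intervalsWithProj (Set.univ : Set α) (Set.univ : Set β) =
      {I | IsIntervalSet I ∧ (∀ i, ∃ j, (i, j) ∈ I) ∧ (∀ j, ∃ i, (i, j) ∈ I)} := by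
  simp [intervalsWithProj, Set.eq_univ_iff_forall]

theorem pairwise_disjoint_intervalsWithProj :
    Pairwise (Function.onFun Disjoint
      fun p : Set α × Set β => intervalsWithProj p.1 p.2) := by
  intro p q hpq
  refine Set.disjoint_left.2 fun I hp hq => hpq ?_
  exact Prod.ext (hp.2.1.symm.trans hq.2.1) (hp.2.2.symm.trans hq.2.2)

end FixedProjections

section Segments

variable {α β : Type} [LinearOrder α] [LinearOrder β]

/-- The segments, that is order-connected subsets, of size `h` of a chain: the possible projections
of an interval of height or width `h`. Since `ncard` is zero on
infinite sets, this is the intended notion only for `h ≠ 0` or finite `α`. -/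
def segmentsOfCard (α : Type*) [LinearOrder α] (h : ℕ) : Set (Set α) :=
  {A | A.OrdConnected ∧ A.ncard = h}

theorem exists_orderEmbedding_range_eq {α : Type*} [LinearOrder α] {A : Set α} (hA : A.Finite) :
    ∃ f : Fin A.ncard ↪o α, Set.range f = A :=
  ⟨hA.toFinset.orderEmbOfFin (Set.ncard_eq_toFinset_card A hA).symm, by simp⟩

theorem ncard_intervalsWithProj_of_mem_segmentsOfCard [Finite α] [Finite β] {h w : ℕ} {A : Set α}
    {B : Set β} (hA : A ∈ segmentsOfCard α h) (hB : B ∈ segmentsOfCard β w) :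
    (intervalsWithProj A B).ncard =
      (intervalsWithProj (Set.univ : Set (Fin h)) (Set.univ : Set (Fin w))).ncard := by
  obtain ⟨hA, rfl⟩ := hA
  obtain ⟨hB, rfl⟩ := hB
  obtain ⟨f, hf⟩ := exists_orderEmbedding_range_eq A.toFinite
  obtain ⟨g, hg⟩ := exists_orderEmbedding_range_eq B.toFinite
  rw [← ncard_intervalsWithProj_range (hf.symm ▸ hA) (hg.symm ▸ hB), hf, hg]

theorem setOf_isIntervalSet_ncard_eq_biUnion (h w : ℕ) :
    {I : Set (α × β) | IsIntervalSet I ∧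
        (Prod.fst '' I).ncard = h ∧ (Prod.snd '' I).ncard = w} =
      ⋃ p ∈ segmentsOfCard α h ×ˢ segmentsOfCard β w, intervalsWithProj p.1 p.2 := by
  ext I
  simp only [Set.mem_iUnion₂]
  constructor
  · rintro ⟨hI, hfst, hsnd⟩
    exact ⟨(Prod.fst '' I, Prod.snd '' I),
      ⟨⟨hI.ordConnected_image_fst, hfst⟩, ⟨hI.ordConnected_image_snd, hsnd⟩⟩, hI, rfl, rfl⟩
  · rintro ⟨⟨_, _⟩, ⟨⟨-, hfst⟩, ⟨-, hsnd⟩⟩, hI, rfl, rfl⟩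
    exact ⟨hI, hfst, hsnd⟩

end Segments

section CountingSegments

variable {m h : ℕ}

/-- The segment `{a, …, a + h - 1}` of `Fin m`, parametrizing the segments of size `h` by their
least element; it is truncated to `Fin m` when `m < a + h`. -/
def finSegment (m h a : ℕ) : Set (Fin m) :=
  Fin.val ⁻¹' Set.Ico a (a + h)

theorem finSegment_mem_segmentsOfCard {a : ℕ} (ha : a + h ≤ m) :
    finSegment m h a ∈ segmentsOfCard (Fin m) h := by
  have hrange : Set.Ico a (a + h) ⊆ Set.range (Fin.val : Fin m → ℕ) := by
    rw [Fin.range_val]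
    exact fun i hi => hi.2.trans_le ha
  refine ⟨Set.ordConnected_Ico.preimage_mono Fin.val_strictMono.monotone, ?_⟩
  rw [finSegment, Set.ncard_preimage_of_injective_subset_range Fin.val_injective hrange]
  simp

theorem exists_finSegment_eq_of_mem_segmentsOfCard (hh : 1 ≤ h) {A : Set (Fin m)}
    (hA : A ∈ segmentsOfCard (Fin m) h) : ∃ a, a + h ≤ m ∧ finSegment m h a = A := by
  obtain ⟨hconn, rfl⟩ := hA
  have hne : A.Nonempty := Set.nonempty_of_ncard_ne_zero (by omega)
  obtain ⟨p, hpA, hpmin⟩ := Set.exists_min_image A id A.toFinite hne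
  obtain ⟨q, hqA, hqmax⟩ := Set.exists_max_image A id A.toFinite hne
  have hIcc : A = Set.Icc p q :=
    Set.Subset.antisymm (fun x hx => ⟨hpmin x hx, hqmax x hx⟩) (hconn.out hpA hqA)
  have hcard : A.ncard = q + 1 - p := by
    rw [hIcc, ← Finset.coe_Icc, Set.ncard_coe_finset, Fin.card_Icc]
  have hpq : (p : ℕ) ≤ q := hpmin q hqA
  refine ⟨p, by omega, ?_⟩
  ext i
  rw [hcard, hIcc, finSegment, Set.mem_preimage, Set.mem_Ico, Set.mem_Icc, Fin.le_def, Fin.le_def]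
  omega

theorem le_of_finSegment_subset (hh : 1 ≤ h) {a b : ℕ} (ha : a + h ≤ m)
    (hab : finSegment m h a ⊆ finSegment m h b) : b ≤ a :=
  have hmem : (⟨a, by omega⟩ : Fin m) ∈ finSegment m h a :=
    ⟨le_rfl, Nat.lt_add_of_pos_right hh⟩
  (hab hmem).1

theorem ncard_segmentsOfCard_fin (hh : 1 ≤ h) (hhm : h ≤ m) :
    (segmentsOfCard (Fin m) h).ncard = m - h + 1 := by
  have hbound {a : ℕ} : a ∈ Set.Iic (m - h) ↔ a + h ≤ m := by
    rw [Set.mem_Iic]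
    omega
  have himage : segmentsOfCard (Fin m) h = finSegment m h '' Set.Iic (m - h) := by
    ext A
    constructor
    · intro hA
      obtain ⟨a, ha, rfl⟩ := exists_finSegment_eq_of_mem_segmentsOfCard hh hA
      exact ⟨a, hbound.2 ha, rfl⟩
    · rintro ⟨a, ha, rfl⟩
      exact finSegment_mem_segmentsOfCard (hbound.1 ha)
  have hinj : Set.InjOn (finSegment m h) (Set.Iic (m - h)) := fun a ha b hb hab =>
    le_antisymm (le_of_finSegment_subset hh (hbound.1 hb) hab.ge)
      (le_of_finSegment_subset hh (hbound.1 ha) hab.le)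
  rw [himage, hinj.ncard_image]
  simp

end CountingSegments

/-- The number of intervals of `Fin m × Fin n` of height `h` and
width `w` equals `(m-h+1)(n-w+1)` times the number of intervals of
`Fin h × Fin w` with both coordinate projections surjective. -/
theorem card_intervals_of_size (m n h w : ℕ) (hh : 1 ≤ h) (hhm : h ≤ m)
    (hw : 1 ≤ w) (hwn : w ≤ n) :
    {I : Set (Fin m × Fin n) | IsIntervalSet I ∧
        (Prod.fst '' I).ncard = h ∧ (Prod.snd '' I).ncard = w}.ncard
      = (m - h + 1) * (n - w + 1) *
        {I : Set (Fin h × Fin w) | IsIntervalSet I ∧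
          (∀ i : Fin h, ∃ j : Fin w, (i, j) ∈ I) ∧
          (∀ j : Fin w, ∃ i : Fin h, (i, j) ∈ I)}.ncard := by
  have hfiber : ∀ p ∈ segmentsOfCard (Fin m) h ×ˢ segmentsOfCard (Fin n) w,
      (intervalsWithProj p.1 p.2).ncard =
        (intervalsWithProj (Set.univ : Set (Fin h)) (Set.univ : Set (Fin w))).ncard :=
    fun _ hp => ncard_intervalsWithProj_of_mem_segmentsOfCard hp.1 hp.2
  rw [setOf_isIntervalSet_ncard_eq_biUnion,
    ncard_biUnion_eq_mul (Set.toFinite _) (fun _ _ => Set.toFinite _)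
      (pairwise_disjoint_intervalsWithProj.set_pairwise _) hfiber,
    Set.ncard_prod, ncard_segmentsOfCard_fin hh hhm, ncard_segmentsOfCard_fin hw hwn,
    intervalsWithProj_univ]
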